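/- Let (x, y_0, y_1, …, y_n) be jointly Gaussian zero-mean random vectors with Σ_00 = Cov(y_0,y_0) invertible, and define ỹ_i = y_i − E[y_i | y_0] and Σ̂_ij = Cov(ỹ_i, ỹ_j). If Σ̂_ii is invertible, then for all i, j ∈ {1,…,n}, E[ỹ_j | y_0, y_i] = Σ̂_ji Σ̂_ii⁻¹ ỹ_i almost surely. -/

import Mathlib

open MeasureTheory ProbabilityTheory Matrix

/-! Write `Ỹ = Y − E[Y | X]`, `Z̃ = Z − E[Z | X]`, and let `R = Z̃ − Σ̂_ZY Σ̂_YY⁻¹ Ỹ`. For Gaussian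
vectors `E[Y | X]` and `E[Z | X]` are affine in `X`, so `(X, Y, R)` is again Gaussian. The residual
`R` is uncorrelated with `X` because innovations are, and with `Ỹ` by the choice of the gain, hence
with `Y = Ỹ + E[Y | X]`. So `R` is independent of `(X, Y)` and `E[R | X, Y] = E[R] = 0`, while `Ỹ`
is already a function of `(X, Y)`. -/

lemma exists_inner_sub_sum_smul_eq_zero {ι E : Type*} [Fintype ι] [NormedAddCommGroup E]
    [InnerProductSpace ℝ E] (v : ι → E) (z : E) :
    ∃ b : ι → ℝ, ∀ i, inner ℝ (z - ∑ k, b k • v k) (v i) = 0 := by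
  let K := Submodule.span ℝ (Set.range v)
  have : FiniteDimensional ℝ K := .span_of_finite ℝ (Set.finite_range v)
  obtain ⟨b, hb⟩ := (Submodule.mem_span_range_iff_exists_fun ℝ).1 (K.starProjection_apply_mem z)
  refine ⟨b, fun i => ?_⟩
  rw [hb]
  exact K.starProjection_inner_eq_zero z (v i) (Submodule.subset_span ⟨i, rfl⟩)

section

variable {Ω ι κ ν : Type*} {m : MeasurableSpace Ω} {μ : Measure Ω}

lemma covariance_eq_inner_toLp [IsFiniteMeasure μ] {f g : Ω → ℝ}
    (hf : MemLp f 2 μ) (hg : MemLp g 2 μ) :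
    cov[f, g; μ] = inner ℝ ((hf.sub (memLp_const (μ[f]))).toLp)
      ((hg.sub (memLp_const (μ[g]))).toLp) := by
  rw [L2.inner_def]
  refine integral_congr_ae ?_
  filter_upwards [(hf.sub (memLp_const (μ[f]))).coeFn_toLp,
    (hg.sub (memLp_const (μ[g]))).coeFn_toLp] with ω hfω hgω
  simp [hfω, hgω, mul_comm]

lemma covariance_sub_sum_mul_left [IsFiniteMeasure μ] [Fintype ι] {X : ι → Ω → ℝ} {f g : Ω → ℝ}
    (hX : ∀ i, MemLp (X i) 2 μ) (hf : MemLp f 2 μ) (hg : MemLp g 2 μ) (b : ι → ℝ) :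
    cov[fun ω => f ω - ∑ i, b i * X i ω, g; μ] = cov[f, g; μ] - ∑ i, b i * cov[X i, g; μ] := by
  have hbX : ∀ i, MemLp (fun ω => b i * X i ω) 2 μ := fun i => (hX i).const_mul (b i)
  rw [covariance_fun_sub_left hf (memLp_finsetSum _ fun i _ => hbX i) hg,
    covariance_fun_sum_left hbX hg]
  simp only [covariance_const_mul_left]

lemma exists_covariance_sub_sum_mul_eq_zero [IsFiniteMeasure μ] [Fintype ι] {X : ι → Ω → ℝ}
    {f : Ω → ℝ} (hX : ∀ i, MemLp (X i) 2 μ) (hf : MemLp f 2 μ) :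
    ∃ b : ι → ℝ, ∀ i, cov[fun ω => f ω - ∑ k, b k * X k ω, X i; μ] = 0 := by
  obtain ⟨b, hb⟩ := exists_inner_sub_sum_smul_eq_zero
    (fun i => ((hX i).sub (memLp_const (μ[X i]))).toLp) (hf.sub (memLp_const (μ[f]))).toLp
  refine ⟨b, fun i => ?_⟩
  rw [covariance_sub_sum_mul_left hX hf (hX i), ← hb i, inner_sub_left, sum_inner]
  simp only [real_inner_smul_left, covariance_eq_inner_toLp hf (hX i),
    fun k => covariance_eq_inner_toLp (hX k) (hX i)]

lemma strongDual_comp_eq_sum [Fintype ι] [DecidableEq ι] (L : StrongDual ℝ (ι → ℝ))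
    (X : Ω → ι → ℝ) : L ∘ X = fun ω => ∑ i, L (Pi.single i 1) * X ω i := by
  ext ω
  nth_rw 1 [Function.comp_apply, pi_eq_sum_univ' (X ω)]
  simp [mul_comm]

lemma covariance_strongDual_comp_eq_zero [IsFiniteMeasure μ] [Finite ι] {X : Ω → ι → ℝ}
    {f : Ω → ℝ} (hX : ∀ i, MemLp (fun ω => X ω i) 2 μ) (hf : MemLp f 2 μ)
    (hcov : ∀ i, cov[fun ω => X ω i, f; μ] = 0) (L : StrongDual ℝ (ι → ℝ)) :
    cov[L ∘ X, f; μ] = 0 := by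
  classical
  have := Fintype.ofFinite ι
  rw [strongDual_comp_eq_sum, covariance_fun_sum_left (fun i => (hX i).const_mul _) hf]
  simp only [covariance_const_mul_left, hcov, mul_zero, Finset.sum_const_zero]

lemma hasGaussianLaw_add_const {E : Type*} [NormedAddCommGroup E] [NormedSpace ℝ E]
    [MeasurableSpace E] [BorelSpace E] {X : Ω → E} (hX : HasGaussianLaw X μ) (c : E) :
    HasGaussianLaw (fun ω => X ω + c) μ where
  isGaussian_map := by
    have := hX.isGaussian_map
    have hmap : μ.map (fun ω => X ω + c) = (μ.map X).map (· + c) :=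
      (AEMeasurable.map_map_of_aemeasurable (g := (· + c)) (by fun_prop) hX.aemeasurable).symm
    rw [hmap]
    infer_instance

lemma hasGaussianLaw_of_forall_sum_mul [Fintype ι] {X : Ω → ι → ℝ}
    (h : ∀ a : ι → ℝ, HasGaussianLaw (fun ω => ∑ i, a i * X ω i) μ) : HasGaussianLaw X μ where
  isGaussian_map := by
    classical
    have hX : AEMeasurable X μ := aemeasurable_pi_iff.2 fun i => by
      simpa [Pi.single_apply] using (h (Pi.single i 1)).aemeasurable
    refine isGaussian_of_isGaussian_map fun L => ?_
    rw [AEMeasurable.map_map_of_aemeasurable L.continuous.aemeasurable hX, strongDual_comp_eq_sum]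
    exact (h _).isGaussian_map

lemma hasGaussianLaw_prodMk_of_forall_sum_mul {σ : Type*} {τ : σ → Type*} [Fintype ι] [Fintype σ]
    [∀ i, Fintype (τ i)] {X : Ω → ι → ℝ} {Y : ∀ i, Ω → τ i → ℝ}
    (h : ∀ (a : ι → ℝ) (b : ∀ i, τ i → ℝ),
      HasGaussianLaw (fun ω => (∑ k, a k * X ω k) + ∑ i, ∑ k, b i k * Y i ω k) μ) (i j : σ) :
    HasGaussianLaw (fun ω => (X ω, Y i ω, Y j ω)) μ := by
  let V : Ω → ι ⊕ (Σ i, τ i) → ℝ := fun ω => Sum.elim (X ω) fun p => Y p.1 ω p.2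
  have hGV : HasGaussianLaw V μ := hasGaussianLaw_of_forall_sum_mul fun c => by
    simpa only [V, Fintype.sum_sum_type, Fintype.sum_sigma, Sum.elim_inl, Sum.elim_inr] using
      h (fun k => c (.inl k)) fun i k => c (.inr ⟨i, k⟩)
  let PX : (ι ⊕ (Σ i, τ i) → ℝ) →L[ℝ] (ι → ℝ) := .pi fun k => .proj (.inl k)
  let PY (i : σ) : (ι ⊕ (Σ i, τ i) → ℝ) →L[ℝ] (τ i → ℝ) := .pi fun k => .proj (.inr ⟨i, k⟩)
  exact hGV.map (PX.prod ((PY i).prod (PY j)))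

lemma condExp_ae_eq_integral_of_covariance_eq_zero {E : Type*} [NormedAddCommGroup E]
    [NormedSpace ℝ E] [mE : MeasurableSpace E] [BorelSpace E] [SecondCountableTopology E]
    [CompleteSpace E] {X : Ω → E} {f : Ω → ℝ} (hX : Measurable X)
    (hG : HasGaussianLaw (fun ω => (X ω, f ω)) μ)
    (hcov : ∀ L : StrongDual ℝ E, cov[L ∘ X, f; μ] = 0) :
    μ[f | mE.comap X] =ᵐ[μ] fun _ => μ[f] := by
  have := hG.isProbabilityMeasure
  have hf := hG.snd.aemeasurable
  have hind : IndepFun X f μ := hG.indepFun_of_covariance_strongDual fun L c => by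
    have hc : c ∘ f = fun ω => f ω * c 1 := by
      ext ω
      simpa using c.map_smul (f ω) 1
    rw [hc, covariance_mul_const_right, hcov, zero_mul]
  have hind' : IndepFun (hf.mk f) X μ := (hind.congr .rfl hf.ae_eq_mk).symm
  calc μ[f | mE.comap X] =ᵐ[μ] μ[hf.mk f | mE.comap X] := condExp_congr_ae hf.ae_eq_mk
    _ =ᵐ[μ] fun _ => μ[hf.mk f] := condExp_indep_eq hf.measurable_mk.comap_le hX.comap_le
        (comap_measurable _).stronglyMeasurable hind'
    _ = fun _ => μ[f] := by rw [integral_congr_ae hf.ae_eq_mk]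

/-- The innovation `Ỹ = Y − E[Y | 𝓖]`: the part of `Y` not predicted by the information `𝓖`,
with the conditional expectation taken coordinatewise. -/
noncomputable def innovation (𝓖 : MeasurableSpace Ω) {_ : MeasurableSpace Ω} (μ : Measure Ω)
    (Y : Ω → κ → ℝ) : Ω → κ → ℝ :=
  fun ω k => Y ω k - (μ[fun ω => Y ω k | 𝓖]) ω

/-- The cross-covariance matrix `Σ̂_YZ = Cov(Ỹ, Z̃)` of two innovations, encoded as a second moment
because innovations are centred. -/
noncomputable def innovationCov (𝓖 : MeasurableSpace Ω) {_ : MeasurableSpace Ω} (μ : Measure Ω)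
    (Y : Ω → κ → ℝ) (Z : Ω → ν → ℝ) : Matrix κ ν ℝ :=
  .of fun k l => ∫ ω, innovation 𝓖 μ Y ω k * innovation 𝓖 μ Z ω l ∂μ

/-- The gain `Σ̂_ZY Σ̂_YY⁻¹` of the best linear estimator of `Z̃` from `Ỹ`. The inverse is `0` when
`Σ̂_YY` is singular. -/
noncomputable def innovationGain [Fintype κ] [DecidableEq κ]
    (𝓖 : MeasurableSpace Ω) {_ : MeasurableSpace Ω} (μ : Measure Ω)
    (Y : Ω → κ → ℝ) (Z : Ω → ν → ℝ) : Matrix ν κ ℝ :=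
  innovationCov 𝓖 μ Z Y * (innovationCov 𝓖 μ Y Y)⁻¹

section Innovation

variable {𝓖 : MeasurableSpace Ω} {Y : Ω → κ → ℝ} {Z : Ω → ν → ℝ}

lemma measurable_innovation_comap_prodMk {X : Ω → ι → ℝ} (k : κ) :
    Measurable[MeasurableSpace.comap (fun ω => (X ω, Y ω)) inferInstance]
      fun ω => innovation (MeasurableSpace.comap X inferInstance) μ Y ω k := by
  have hpair : Measurable[MeasurableSpace.comap (fun ω => (X ω, Y ω)) inferInstance]
      fun ω => (X ω, Y ω) := comap_measurable _
  have hle : MeasurableSpace.comap X inferInstance ≤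
      MeasurableSpace.comap (fun ω => (X ω, Y ω)) inferInstance :=
    (measurable_fst.comp hpair).comap_le
  exact ((measurable_pi_apply k).comp (measurable_snd.comp hpair)).sub
    (stronglyMeasurable_condExp.measurable.mono hle le_rfl)

lemma memLp_innovation (hY : ∀ k, MemLp (fun ω => Y ω k) 2 μ) (k : κ) :
    MemLp (fun ω => innovation 𝓖 μ Y ω k) 2 μ :=
  (hY k).sub ((hY k).condExp one_le_two)

lemma integral_innovation [IsFiniteMeasure μ] (h𝓖 : 𝓖 ≤ m)
    (hY : ∀ k, Integrable (fun ω => Y ω k) μ) (k : κ) : ∫ ω, innovation 𝓖 μ Y ω k ∂μ = 0 := by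
  simp only [innovation]
  rw [integral_sub (hY k) integrable_condExp, integral_condExp h𝓖, sub_self]

lemma innovationCov_apply [IsFiniteMeasure μ] (h𝓖 : 𝓖 ≤ m)
    (hY : ∀ k, Integrable (fun ω => Y ω k) μ) (hZ : ∀ k, Integrable (fun ω => Z ω k) μ)
    (k : κ) (l : ν) :
    innovationCov 𝓖 μ Y Z k l =
      cov[fun ω => innovation 𝓖 μ Y ω k, fun ω => innovation 𝓖 μ Z ω l; μ] := by
  simp only [innovationCov, of_apply, covariance, integral_innovation h𝓖 hY,
    integral_innovation h𝓖 hZ, sub_zero]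

lemma covariance_innovation_eq_zero [IsFiniteMeasure μ] (h𝓖 : 𝓖 ≤ m)
    (hY : ∀ k, MemLp (fun ω => Y ω k) 2 μ) {g : Ω → ℝ} (hg : MemLp g 2 μ)
    (hg𝓖 : StronglyMeasurable[𝓖] g) (k : κ) :
    cov[fun ω => innovation 𝓖 μ Y ω k, g; μ] = 0 := by
  set f : Ω → ℝ := fun ω => Y ω k
  set h : Ω → ℝ := fun ω => g ω - μ[g]
  have hf : MemLp f 2 μ := hY k
  have hE : MemLp (μ[f | 𝓖]) 2 μ := hf.condExp one_le_two
  have hh : MemLp h 2 μ := hg.sub (memLp_const _)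
  have hh𝓖 : StronglyMeasurable[𝓖] h := hg𝓖.sub stronglyMeasurable_const
  calc cov[fun ω => innovation 𝓖 μ Y ω k, g; μ]
      = ∫ ω, (f * h - μ[f | 𝓖] * h) ω ∂μ := by
        rw [covariance, integral_innovation h𝓖 fun k => (hY k).integrable one_le_two]
        simp only [sub_zero, innovation, Pi.sub_apply, Pi.mul_apply, ← sub_mul, f, h]
    _ = ∫ ω, (f * h) ω ∂μ - ∫ ω, (μ[f * h | 𝓖]) ω ∂μ := by
        rw [integral_sub' (hf.integrable_mul hh) (hE.integrable_mul hh), integral_congr_ae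
          (condExp_mul_of_stronglyMeasurable_right hh𝓖 (hf.integrable_mul hh)
            (hf.integrable one_le_two))]
    _ = 0 := by rw [integral_condExp h𝓖, sub_self]

variable [Fintype κ] [DecidableEq κ]

/-- The error `Z̃ − Σ̂_ZY Σ̂_YY⁻¹ Ỹ` of the best linear estimator of `Z̃` from `Ỹ`; it carries the
part of `Z̃` that is orthogonal to `Ỹ`. -/
noncomputable def innovationResidual (𝓖 : MeasurableSpace Ω) {_ : MeasurableSpace Ω}
    (μ : Measure Ω) (Y : Ω → κ → ℝ) (Z : Ω → ν → ℝ) : Ω → ν → ℝ :=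
  fun ω => innovation 𝓖 μ Z ω - innovationGain 𝓖 μ Y Z *ᵥ innovation 𝓖 μ Y ω

lemma memLp_innovationResidual (hY : ∀ k, MemLp (fun ω => Y ω k) 2 μ)
    (hZ : ∀ k, MemLp (fun ω => Z ω k) 2 μ) (k : ν) :
    MemLp (fun ω => innovationResidual 𝓖 μ Y Z ω k) 2 μ :=
  (memLp_innovation hZ k).sub <|
    memLp_finsetSum _ fun l _ => (memLp_innovation hY l).const_mul _

lemma integral_innovationResidual [IsFiniteMeasure μ] (h𝓖 : 𝓖 ≤ m)
    (hY : ∀ k, MemLp (fun ω => Y ω k) 2 μ) (hZ : ∀ k, MemLp (fun ω => Z ω k) 2 μ) (k : ν) :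
    ∫ ω, innovationResidual 𝓖 μ Y Z ω k ∂μ = 0 := by
  have hY₁ := fun l => (hY l).integrable one_le_two
  have hY₂ := fun l => ((memLp_innovation (𝓖 := 𝓖) hY l).integrable one_le_two).const_mul
    (innovationGain 𝓖 μ Y Z k l)
  have hZ₁ := fun l => (hZ l).integrable one_le_two
  simp only [innovationResidual, Pi.sub_apply, mulVec, dotProduct]
  rw [integral_sub ((memLp_innovation hZ k).integrable one_le_two)
    (integrable_finsetSum _ fun l _ => hY₂ l), integral_finsetSum _ fun l _ => hY₂ l]
  simp only [integral_const_mul, integral_innovation h𝓖 hY₁, integral_innovation h𝓖 hZ₁,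
    mul_zero, Finset.sum_const_zero, sub_zero]

lemma covariance_innovationResidual [IsFiniteMeasure μ]
    (hY : ∀ k, MemLp (fun ω => Y ω k) 2 μ) (hZ : ∀ k, MemLp (fun ω => Z ω k) 2 μ)
    {g : Ω → ℝ} (hg : MemLp g 2 μ) (k : ν) :
    cov[fun ω => innovationResidual 𝓖 μ Y Z ω k, g; μ] =
      cov[fun ω => innovation 𝓖 μ Z ω k, g; μ] -
        ∑ l, innovationGain 𝓖 μ Y Z k l * cov[fun ω => innovation 𝓖 μ Y ω l, g; μ] :=
  covariance_sub_sum_mul_left (memLp_innovation hY) (memLp_innovation hZ k) hg _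

lemma covariance_innovationResidual_eq_zero_of_stronglyMeasurable [IsFiniteMeasure μ]
    (h𝓖 : 𝓖 ≤ m) (hY : ∀ k, MemLp (fun ω => Y ω k) 2 μ) (hZ : ∀ k, MemLp (fun ω => Z ω k) 2 μ)
    {g : Ω → ℝ} (hg : MemLp g 2 μ) (hg𝓖 : StronglyMeasurable[𝓖] g) (k : ν) :
    cov[fun ω => innovationResidual 𝓖 μ Y Z ω k, g; μ] = 0 := by
  simp only [covariance_innovationResidual hY hZ hg, covariance_innovation_eq_zero h𝓖 hY hg hg𝓖,
    covariance_innovation_eq_zero h𝓖 hZ hg hg𝓖, mul_zero, Finset.sum_const_zero, sub_zero]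

lemma covariance_innovationResidual_innovation_eq_zero [IsFiniteMeasure μ] (h𝓖 : 𝓖 ≤ m)
    (hY : ∀ k, MemLp (fun ω => Y ω k) 2 μ) (hZ : ∀ k, MemLp (fun ω => Z ω k) 2 μ)
    (hinv : IsUnit (innovationCov 𝓖 μ Y Y).det) (k : ν) (l : κ) :
    cov[fun ω => innovationResidual 𝓖 μ Y Z ω k, fun ω => innovation 𝓖 μ Y ω l; μ] = 0 := by
  have hY₁ := fun l => (hY l).integrable one_le_two
  have hZ₁ := fun l => (hZ l).integrable one_le_two
  rw [covariance_innovationResidual hY hZ (memLp_innovation hY l),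
    ← innovationCov_apply h𝓖 hZ₁ hY₁]
  simp only [← innovationCov_apply h𝓖 hY₁ hY₁, ← mul_apply]
  rw [innovationGain, nonsing_inv_mul_cancel_right _ _ hinv, sub_self]

lemma covariance_innovationResidual_eq_zero [IsFiniteMeasure μ] (h𝓖 : 𝓖 ≤ m)
    (hY : ∀ k, MemLp (fun ω => Y ω k) 2 μ) (hZ : ∀ k, MemLp (fun ω => Z ω k) 2 μ)
    (hinv : IsUnit (innovationCov 𝓖 μ Y Y).det) (k : ν) (l : κ) :
    cov[fun ω => innovationResidual 𝓖 μ Y Z ω k, fun ω => Y ω l; μ] = 0 := by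
  have hE : MemLp (μ[fun ω => Y ω l | 𝓖]) 2 μ := (hY l).condExp one_le_two
  have hdecomp : (fun ω => Y ω l) =
      (fun ω => innovation 𝓖 μ Y ω l) + μ[fun ω => Y ω l | 𝓖] := by
    ext ω
    simp [innovation]
  rw [hdecomp, covariance_add_right (memLp_innovationResidual hY hZ k) (memLp_innovation hY l) hE,
    covariance_innovationResidual_innovation_eq_zero h𝓖 hY hZ hinv,
    covariance_innovationResidual_eq_zero_of_stronglyMeasurable h𝓖 hY hZ hE
      stronglyMeasurable_condExp, add_zero]

end Innovation

section Gaussian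

variable [Finite ι] {X : Ω → ι → ℝ}

lemma exists_condExp_ae_eq_affine {f : Ω → ℝ} (hX : Measurable X)
    (hG : HasGaussianLaw (fun ω => (X ω, f ω)) μ) :
    ∃ (L : StrongDual ℝ (ι → ℝ)) (c : ℝ),
      μ[f | MeasurableSpace.comap X inferInstance] =ᵐ[μ] fun ω => L (X ω) + c := by
  have := Fintype.ofFinite ι
  have := hG.isProbabilityMeasure
  have hX₂ : ∀ i, MemLp (fun ω => X ω i) 2 μ := fun i => (hG.fst.eval i).memLp_two
  obtain ⟨b, hb⟩ := exists_covariance_sub_sum_mul_eq_zero hX₂ hG.snd.memLp_two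
  let L : StrongDual ℝ (ι → ℝ) := ∑ i, b i • .proj i
  have hL : ∀ x, L x = ∑ i, b i * x i := fun x => by simp [L]
  have hGsub : HasGaussianLaw (fun ω => (X ω, f ω - L (X ω))) μ :=
    hG.map <| (ContinuousLinearMap.fst ℝ (ι → ℝ) ℝ).prod
      (ContinuousLinearMap.snd ℝ (ι → ℝ) ℝ - L ∘L ContinuousLinearMap.fst ℝ (ι → ℝ) ℝ)
  have hLX : Integrable (fun ω => L (X ω)) μ := (hG.fst.map L).integrable
  have hLX_meas : Measurable[MeasurableSpace.comap X inferInstance] fun ω => L (X ω) :=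
    L.measurable.comp (comap_measurable X)
  have hmean := condExp_ae_eq_integral_of_covariance_eq_zero hX hGsub <|
    covariance_strongDual_comp_eq_zero hX₂ hGsub.snd.memLp_two fun i => by
      rw [covariance_comm]
      simpa only [hL] using hb i
  refine ⟨L, ∫ ω, f ω - L (X ω) ∂μ, ?_⟩
  have hsub := condExp_sub hG.snd.integrable hLX (MeasurableSpace.comap X inferInstance)
  rw [condExp_of_stronglyMeasurable hX.comap_le hLX_meas.stronglyMeasurable hLX] at hsub
  filter_upwards [hmean, hsub] with ω hmeanω hsubω
  exact sub_eq_iff_eq_add'.1 (hsubω.symm.trans hmeanω)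

lemma exists_innovation_ae_eq_affine [Finite κ] {Y : Ω → κ → ℝ} (hX : Measurable X)
    (hG : HasGaussianLaw (fun ω => (X ω, Y ω)) μ) :
    ∃ (L : (ι → ℝ) →L[ℝ] (κ → ℝ)) (c : κ → ℝ),
      innovation (MeasurableSpace.comap X inferInstance) μ Y =ᵐ[μ]
        fun ω => Y ω - L (X ω) + c := by
  have := Fintype.ofFinite ι
  have := Fintype.ofFinite κ
  have hGk : ∀ k, HasGaussianLaw (fun ω => (X ω, Y ω k)) μ := fun k =>
    hG.map (.prodMap (.id ℝ _) (.proj k))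
  choose L c h using fun k => exists_condExp_ae_eq_affine hX (hGk k)
  refine ⟨.pi L, -c, ?_⟩
  filter_upwards [ae_all_iff.2 h] with ω hω
  ext k
  simp only [innovation, hω k, Pi.add_apply, Pi.sub_apply, Pi.neg_apply,
    ContinuousLinearMap.coe_pi']
  ring

variable [Fintype κ] [DecidableEq κ] {Y : Ω → κ → ℝ}

lemma hasGaussianLaw_prodMk_innovationResidual [Finite ν] {Z : Ω → ν → ℝ} (hX : Measurable X)
    (hG : HasGaussianLaw (fun ω => (X ω, Y ω, Z ω)) μ) :
    HasGaussianLaw (fun ω => ((X ω, Y ω),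
      innovationResidual (MeasurableSpace.comap X inferInstance) μ Y Z ω)) μ := by
  have := Fintype.ofFinite ι
  have := Fintype.ofFinite ν
  set A := innovationGain (MeasurableSpace.comap X inferInstance) μ Y Z
  have hXY : HasGaussianLaw (fun ω => (X ω, Y ω)) μ :=
    hG.map (.prodMap (.id ℝ _) (.fst ℝ _ _))
  have hXZ : HasGaussianLaw (fun ω => (X ω, Z ω)) μ :=
    hG.map (.prodMap (.id ℝ _) (.snd ℝ _ _))
  obtain ⟨L, c, hL⟩ := exists_innovation_ae_eq_affine hX hXY
  obtain ⟨M, d, hM⟩ := exists_innovation_ae_eq_affine hX hXZ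
  let x := ContinuousLinearMap.fst ℝ (ι → ℝ) ((κ → ℝ) × (ν → ℝ))
  let y := ContinuousLinearMap.fst ℝ (κ → ℝ) (ν → ℝ) ∘L .snd ℝ (ι → ℝ) _
  let z := ContinuousLinearMap.snd ℝ (κ → ℝ) (ν → ℝ) ∘L .snd ℝ (ι → ℝ) _
  have hlin : HasGaussianLaw (fun ω => ((X ω, Y ω),
      (Z ω - M (X ω)) - A *ᵥ (Y ω - L (X ω)))) μ :=
    hG.map ((x.prod y).prod
      ((z - M ∘L x) - A.mulVecLin.toContinuousLinearMap ∘L (y - L ∘L x)))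
  refine (hasGaussianLaw_add_const hlin (0, d - A *ᵥ c)).congr ?_
  filter_upwards [hL, hM] with ω hLω hMω
  simp only [innovationResidual, hLω, hMω, mulVec_add, Prod.mk_add_mk, add_zero]
  congr 1
  abel

lemma condExp_innovationResidual_ae_eq_zero [Finite ν] {Z : Ω → ν → ℝ} (hX : Measurable X)
    (hY : Measurable Y) (hG : HasGaussianLaw (fun ω => (X ω, Y ω, Z ω)) μ)
    (hinv : IsUnit (innovationCov (MeasurableSpace.comap X inferInstance) μ Y Y).det) (k : ν) :
    μ[fun ω => innovationResidual (MeasurableSpace.comap X inferInstance) μ Y Z ω k |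
      MeasurableSpace.comap (fun ω => (X ω, Y ω)) inferInstance] =ᵐ[μ] 0 := by
  have := Fintype.ofFinite ι
  have := Fintype.ofFinite ν
  have := hG.isProbabilityMeasure
  have hY₂ : ∀ l, MemLp (fun ω => Y ω l) 2 μ := fun l => (hG.snd.fst.eval l).memLp_two
  have hZ₂ : ∀ l, MemLp (fun ω => Z ω l) 2 μ := fun l => (hG.snd.snd.eval l).memLp_two
  have hR₂ := memLp_innovationResidual (𝓖 := MeasurableSpace.comap X inferInstance) hY₂ hZ₂ k
  have hGk : HasGaussianLaw (fun ω => ((X ω, Y ω),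
      innovationResidual (MeasurableSpace.comap X inferInstance) μ Y Z ω k)) μ :=
    (hasGaussianLaw_prodMk_innovationResidual hX hG).map (.prodMap (.id ℝ _) (.proj k))
  refine (condExp_ae_eq_integral_of_covariance_eq_zero (hX.prodMk hY) hGk fun L => ?_).trans ?_
  · let LX := L ∘L .inl ℝ _ _
    let LY := L ∘L .inr ℝ _ _
    have hsplit : L ∘ (fun ω => (X ω, Y ω)) = LX ∘ X + LY ∘ Y := by
      ext ω
      simp [LX, LY, ← map_add]
    have hLX₂ : MemLp (LX ∘ X) 2 μ := (hG.fst.map LX).memLp_two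
    have hLY₂ : MemLp (LY ∘ Y) 2 μ := (hG.snd.fst.map LY).memLp_two
    have hLX_meas := (LX.measurable.comp (comap_measurable X)).stronglyMeasurable
    have hcovX := covariance_innovationResidual_eq_zero_of_stronglyMeasurable hX.comap_le
      hY₂ hZ₂ hLX₂ hLX_meas k
    have hcovY := covariance_strongDual_comp_eq_zero hY₂ hR₂ (fun l => by
      rw [covariance_comm, covariance_innovationResidual_eq_zero hX.comap_le hY₂ hZ₂ hinv]) LY
    rw [hsplit, covariance_add_left hLX₂ hLY₂ hR₂, covariance_comm, hcovX, hcovY, add_zero]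
  · rw [integral_innovationResidual hX.comap_le hY₂ hZ₂]
    rfl

theorem stmt8_general [Finite ν] {Z : Ω → ν → ℝ} (hX : Measurable X)
    (hY : Measurable Y) (hG : HasGaussianLaw (fun ω => (X ω, Y ω, Z ω)) μ)
    (hinv : IsUnit (innovationCov (MeasurableSpace.comap X inferInstance) μ Y Y).det) (k : ν) :
    μ[fun ω => innovation (MeasurableSpace.comap X inferInstance) μ Z ω k |
      MeasurableSpace.comap (fun ω => (X ω, Y ω)) inferInstance] =ᵐ[μ]
        fun ω => (innovationGain (MeasurableSpace.comap X inferInstance) μ Y Z *ᵥ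
          innovation (MeasurableSpace.comap X inferInstance) μ Y ω) k := by
  have := Fintype.ofFinite ι
  have := Fintype.ofFinite ν
  have := hG.isProbabilityMeasure
  set 𝓖 : MeasurableSpace Ω := MeasurableSpace.comap X inferInstance
  set 𝓗 : MeasurableSpace Ω := MeasurableSpace.comap (fun ω => (X ω, Y ω)) inferInstance
  have hY₂ : ∀ l, MemLp (fun ω => Y ω l) 2 μ := fun l => (hG.snd.fst.eval l).memLp_two
  have hZ₂ : ∀ l, MemLp (fun ω => Z ω l) 2 μ := fun l => (hG.snd.snd.eval l).memLp_two
  set U : Ω → ℝ := fun ω => (innovationGain 𝓖 μ Y Z *ᵥ innovation 𝓖 μ Y ω) k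
  have hU : Integrable U μ := integrable_finsetSum _ fun l _ =>
    ((memLp_innovation hY₂ l).integrable one_le_two).const_mul _
  have hU_meas : Measurable[𝓗] U :=
    Finset.measurable_sum _ fun l _ => (measurable_innovation_comap_prodMk l).const_mul _
  have hZ := condExp_sub ((memLp_innovation (𝓖 := 𝓖) hZ₂ k).integrable one_le_two) hU 𝓗
  rw [condExp_of_stronglyMeasurable (hX.prodMk hY).comap_le hU_meas.stronglyMeasurable hU] at hZ
  filter_upwards [hZ, condExp_innovationResidual_ae_eq_zero hX hY hG hinv k] with ω hsub hzero
  exact sub_eq_zero.1 (hsub.symm.trans hzero)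

end Gaussian

end

/-- Let `(x, y₀, y₁, …, yₙ)` be jointly Gaussian zero-mean random vectors with
`Cov(y₀,y₀)` invertible, `ỹᵢ = yᵢ − E[yᵢ | y₀]`, `Σ̂ᵢⱼ = Cov(ỹᵢ, ỹⱼ)`. If `Σ̂ᵢᵢ` is
invertible, then `E[ỹⱼ | y₀, yᵢ] = Σ̂ⱼᵢ Σ̂ᵢᵢ⁻¹ ỹᵢ` almost surely. -/
theorem stmt8 {Ω : Type*} [MeasurableSpace Ω] (μ : Measure Ω) [IsProbabilityMeasure μ]
    (dx q n : ℕ) (dy : Fin n → ℕ)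
    (x : Ω → Fin dx → ℝ) (y0 : Ω → Fin q → ℝ) (y : ∀ i : Fin n, Ω → Fin (dy i) → ℝ)
    (hx : Measurable x) (hy0 : Measurable y0) (hy : ∀ i, Measurable (y i))
    (hGauss : ∀ (a : Fin dx → ℝ) (b0 : Fin q → ℝ) (b : ∀ i, Fin (dy i) → ℝ),
      ∃ v : NNReal,
        μ.map (fun ω => (∑ k, a k * x ω k) + (∑ k, b0 k * y0 ω k)
          + ∑ i, ∑ k, b i k * y i ω k) = gaussianReal 0 v)
    (Sigma00 : Matrix (Fin q) (Fin q) ℝ)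
    (hSigma00 : ∀ k l, Sigma00 k l = ∫ ω, y0 ω k * y0 ω l ∂μ)
    (hinv0 : IsUnit Sigma00.det)
    (yhat : ∀ i : Fin n, Ω → Fin (dy i) → ℝ)
    (hyhat : ∀ i, yhat i = fun ω k =>
      (μ[(fun ω => y i ω k) | MeasurableSpace.comap y0 inferInstance]) ω)
    (Sigmahat : ∀ i j, Matrix (Fin (dy i)) (Fin (dy j)) ℝ)
    (hSigmahat : ∀ i j k l, Sigmahat i j k l
      = ∫ ω, (y i ω k - yhat i ω k) * (y j ω l - yhat j ω l) ∂μ)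
    (hinv : ∀ i, IsUnit (Sigmahat i i).det) :
    ∀ i j k,
      (μ[(fun ω => y j ω k - yhat j ω k) |
          MeasurableSpace.comap (fun ω => (y0 ω, y i ω)) inferInstance])
        =ᵐ[μ] fun ω =>
          (Sigmahat j i * (Sigmahat i i)⁻¹).mulVec (fun l => y i ω l - yhat i ω l) k := by
  have hGy : ∀ i j, HasGaussianLaw (fun ω => (y0 ω, y i ω, y j ω)) μ :=
    hasGaussianLaw_prodMk_of_forall_sum_mul fun b0 b => by
      obtain ⟨v, hv⟩ := hGauss 0 b0 b
      simp only [Pi.zero_apply, zero_mul, Finset.sum_const_zero, zero_add] at hv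
      exact ⟨hv ▸ inferInstance⟩
  obtain rfl := funext hyhat
  obtain rfl : Sigmahat = fun i j =>
      innovationCov (MeasurableSpace.comap y0 inferInstance) μ (y i) (y j) := by
    ext i j k l
    exact hSigmahat i j k l
  exact fun i j => stmt8_general hy0 (hy i) (hGy i j) (hinv i)
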